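/- Factorization of differences of elliptic Faber generating functions (identity (den3)): Let τ lie in the complex upper half-plane and let u, ξ_i, ξ_j ∈ ℂ be such that all theta-function values appearing in denominators below are nonzero. Then S'(u+ξ_j,τ)/S'(ξ_j,τ) − S'(u+ξ_i,τ)/S'(ξ_i,τ) = [ θ₂(u+ξ_i+ξ_j, τ)·θ₃(u+ξ_i+ξ_j, τ)·θ₁(u, τ)·θ₄(u, τ) / ( θ₁(u+ξ_i, τ)·θ₄(u+ξ_i, τ)·θ₁(u+ξ_j, τ)·θ₄(u+ξ_j, τ) ) ] · [ θ₁(ξ_j−ξ_i, τ/2)·θ₂(0, τ/2) / ( θ₂(ξ_i, τ/2)·θ₂(ξ_j, τ/2) ) ]. -/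

import Mathlib

open Complex

/-- Jacobi theta function θ₁(u,τ). -/
noncomputable def theta1 (u τ : ℂ) : ℂ :=
  -∑' k : ℤ, Complex.exp ((Real.pi : ℂ) * Complex.I * τ * ((k : ℂ) + 1/2)^2
      + 2 * (Real.pi : ℂ) * Complex.I * (u + 1/2) * ((k : ℂ) + 1/2))

/-- Jacobi theta function θ₂(u,τ). -/
noncomputable def theta2 (u τ : ℂ) : ℂ :=
  ∑' k : ℤ, Complex.exp ((Real.pi : ℂ) * Complex.I * τ * ((k : ℂ) + 1/2)^2
      + 2 * (Real.pi : ℂ) * Complex.I * u * ((k : ℂ) + 1/2))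

/-- Jacobi theta function θ₃(u,τ). -/
noncomputable def theta3 (u τ : ℂ) : ℂ :=
  ∑' k : ℤ, Complex.exp ((Real.pi : ℂ) * Complex.I * τ * (k : ℂ)^2
      + 2 * (Real.pi : ℂ) * Complex.I * u * (k : ℂ))

/-- Jacobi theta function θ₄(u,τ). -/
noncomputable def theta4 (u τ : ℂ) : ℂ :=
  ∑' k : ℤ, Complex.exp ((Real.pi : ℂ) * Complex.I * τ * (k : ℂ)^2
      + 2 * (Real.pi : ℂ) * Complex.I * (u + 1/2) * (k : ℂ))

/-- ζ_a(u,τ) = θ_a'(u,τ)/θ_a(u,τ). -/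
noncomputable def zeta1 (u τ : ℂ) : ℂ := deriv (fun v => theta1 v τ) u / theta1 u τ
noncomputable def zeta2 (u τ : ℂ) : ℂ := deriv (fun v => theta2 v τ) u / theta2 u τ
noncomputable def zeta3 (u τ : ℂ) : ℂ := deriv (fun v => theta3 v τ) u / theta3 u τ
noncomputable def zeta4 (u τ : ℂ) : ℂ := deriv (fun v => theta4 v τ) u / theta4 u τ

/-- ℘_a(u,τ) = −∂_u ζ_a(u,τ). -/
noncomputable def wp1 (u τ : ℂ) : ℂ := -deriv (fun v => zeta1 v τ) u
noncomputable def wp2 (u τ : ℂ) : ℂ := -deriv (fun v => zeta2 v τ) u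
noncomputable def wp1' (u τ : ℂ) : ℂ := deriv (fun v => wp1 v τ) u
noncomputable def wp2' (u τ : ℂ) : ℂ := deriv (fun v => wp2 v τ) u

/-- S'(u,τ) = ζ₁(u,τ) − ζ₄(u,τ). -/
noncomputable def Sp (u τ : ℂ) : ℂ := zeta1 u τ - zeta4 u τ
/-- S''(u,τ) = ∂_u S'(u,τ). -/
noncomputable def Spp (u τ : ℂ) : ℂ := deriv (fun v => Sp v τ) u
/-- S'''(u,τ) = ∂_u S''(u,τ). -/
noncomputable def Sppp (u τ : ℂ) : ℂ := deriv (fun v => Spp v τ) u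

/-- Partial derivative in the j-th coordinate of a ℂ-valued function on ℝ^N. -/
noncomputable def pdC {N : ℕ} (j : Fin N) (f : (Fin N → ℝ) → ℂ) (x : Fin N → ℝ) : ℂ :=
  fderiv ℝ f x (Pi.single j 1)

/-- Partial derivative in the j-th coordinate of an ℝ-valued function on ℝ^d. -/
noncomputable def pd {d : ℕ} (j : Fin d) (f : (Fin d → ℝ) → ℝ) (x : Fin d → ℝ) : ℝ :=
  fderiv ℝ f x (Pi.single j 1)


lemma aux_theta3_eq (u τ : ℂ) : theta3 u τ = jacobiTheta₂ u τ := by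
  unfold theta3 jacobiTheta₂ jacobiTheta₂_term
  refine tsum_congr fun k => ?_
  congr 1; ring

lemma aux_theta2_term (u τ : ℂ) (k : ℤ) :
    Complex.exp ((Real.pi : ℂ) * Complex.I * τ * ((k : ℂ) + 1/2)^2
      + 2 * (Real.pi : ℂ) * Complex.I * u * ((k : ℂ) + 1/2)) =
    Complex.exp (Real.pi * Complex.I * τ / 4 + Real.pi * Complex.I * u)
      * jacobiTheta₂_term k (u + τ / 2) τ := by
  unfold jacobiTheta₂_term
  rw [← Complex.exp_add]
  congr 1; ring

lemma aux_theta2_eq (u τ : ℂ) : theta2 u τ =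
    Complex.exp (Real.pi * Complex.I * τ / 4 + Real.pi * Complex.I * u)
      * jacobiTheta₂ (u + τ / 2) τ := by
  unfold theta2 jacobiTheta₂
  rw [← tsum_mul_left]
  exact tsum_congr fun k => aux_theta2_term u τ k

lemma aux_hasSum2 (u τ : ℂ) (hτ : 0 < τ.im) :
    HasSum (fun k : ℤ => Complex.exp ((Real.pi : ℂ) * Complex.I * τ * ((k : ℂ) + 1/2)^2
      + 2 * (Real.pi : ℂ) * Complex.I * u * ((k : ℂ) + 1/2))) (theta2 u τ) := by
  rw [aux_theta2_eq]
  simp_rw [aux_theta2_term]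
  exact (hasSum_jacobiTheta₂_term _ hτ).mul_left _

lemma aux_hasSum3 (u τ : ℂ) (hτ : 0 < τ.im) :
    HasSum (fun k : ℤ => Complex.exp ((Real.pi : ℂ) * Complex.I * τ * (k : ℂ)^2
      + 2 * (Real.pi : ℂ) * Complex.I * u * (k : ℂ))) (theta3 u τ) := by
  rw [aux_theta3_eq]
  convert hasSum_jacobiTheta₂_term u hτ using 2 with k
  unfold jacobiTheta₂_term
  congr 1; ring

lemma aux_theta1_shift (u τ : ℂ) : theta1 u τ = - theta2 (u + 1/2) τ := rfl

lemma aux_theta4_shift (u τ : ℂ) : theta4 u τ = theta3 (u + 1/2) τ := rfl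

lemma aux_theta3_neg (u τ : ℂ) : theta3 (-u) τ = theta3 u τ := by
  rw [aux_theta3_eq, aux_theta3_eq, jacobiTheta₂_neg_left]

lemma aux_theta3_add_one (u τ : ℂ) : theta3 (u + 1) τ = theta3 u τ := by
  rw [aux_theta3_eq, aux_theta3_eq, jacobiTheta₂_add_left]

lemma aux_theta2_neg (u τ : ℂ) : theta2 (-u) τ = theta2 u τ := by
  unfold theta2
  rw [← (Equiv.subLeft (-1 : ℤ)).tsum_eq]
  refine tsum_congr fun k => ?_
  simp only [Equiv.subLeft_apply]
  push_cast
  congr 1; ring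

lemma aux_theta2_add_one (u τ : ℂ) : theta2 (u + 1) τ = - theta2 u τ := by
  rw [aux_theta2_eq, aux_theta2_eq, show u + 1 + τ / 2 = (u + τ / 2) + 1 by ring,
    jacobiTheta₂_add_left,
    show (Real.pi * Complex.I * τ / 4 + Real.pi * Complex.I * (u + 1) : ℂ)
      = (Real.pi * Complex.I * τ / 4 + Real.pi * Complex.I * u) + Real.pi * Complex.I by ring,
    Complex.exp_add, Complex.exp_pi_mul_I]
  ring

lemma aux_theta1_neg (u τ : ℂ) : theta1 (-u) τ = - theta1 u τ := by
  rw [aux_theta1_shift, aux_theta1_shift, ← aux_theta2_neg,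
    show -(-u + 1/2) = u - 1/2 by ring, show u + 1/2 = (u - 1/2) + 1 by ring, aux_theta2_add_one,
    neg_neg]

lemma aux_theta4_neg (u τ : ℂ) : theta4 (-u) τ = theta4 u τ := by
  rw [aux_theta4_shift, aux_theta4_shift, ← aux_theta3_neg,
    show -(-u + 1/2) = u - 1/2 by ring, show u + 1/2 = (u - 1/2) + 1 by ring, aux_theta3_add_one]

lemma aux_prod {f g : ℤ → ℂ} {a b : ℂ} (hf : HasSum f a) (hg : HasSum g b) :
    HasSum (fun x : ℤ × ℤ => f x.1 * g x.2) (a * b) :=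
  hf.mul hg (summable_mul_of_summable_norm hf.summable.norm hg.summable.norm)

/-- The key product formula. -/
lemma aux_theta22 (α β τ : ℂ) (hτ : 0 < τ.im) :
    theta2 α (τ / 2) * theta2 β (τ / 2) =
      theta2 (α + β) τ * theta3 (α - β) τ + theta3 (α + β) τ * theta2 (α - β) τ := by
  have hT : 0 < (τ / 2).im := by
    have : (τ / 2).im = τ.im / 2 := by simp
    rw [this]; positivity
  have hL := aux_prod (aux_hasSum2 α (τ / 2) hT) (aux_hasSum2 β (τ / 2) hT)
  have hR1 := aux_prod (aux_hasSum2 (α + β) τ hτ) (aux_hasSum3 (α - β) τ hτ)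
  have hR2 := aux_prod (aux_hasSum3 (α + β) τ hτ) (aux_hasSum2 (α - β) τ hτ)
  set F : ℤ × ℤ → ℂ := fun x => Complex.exp ((Real.pi : ℂ) * Complex.I * (τ / 2) *
      ((x.1 : ℂ) + 1/2)^2 + 2 * (Real.pi : ℂ) * Complex.I * α * ((x.1 : ℂ) + 1/2)) *
    Complex.exp ((Real.pi : ℂ) * Complex.I * (τ / 2) *
      ((x.2 : ℂ) + 1/2)^2 + 2 * (Real.pi : ℂ) * Complex.I * β * ((x.2 : ℂ) + 1/2)) with hF
  let i1 : ℤ × ℤ → ℤ × ℤ := fun x => (x.1 + x.2, x.1 - x.2)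
  let i2 : ℤ × ℤ → ℤ × ℤ := fun x => (x.1 + x.2, x.1 - x.2 - 1)
  have inj1 : Function.Injective i1 := by
    rintro ⟨a, b⟩ ⟨c, d⟩ h
    simp only [i1, Prod.mk.injEq] at h ⊢
    omega
  have inj2 : Function.Injective i2 := by
    rintro ⟨a, b⟩ ⟨c, d⟩ h
    simp only [i2, Prod.mk.injEq] at h ⊢
    omega
  have hc : IsCompl (Set.range i1) (Set.range i2) := by
    rw [isCompl_iff, Set.disjoint_iff, codisjoint_iff]
    constructor
    · rintro ⟨p, q⟩ ⟨⟨⟨a, b⟩, h⟩, ⟨⟨c, d⟩, h'⟩⟩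
      simp only [i1, i2, Prod.mk.injEq] at h h'
      exfalso; omega
    · refine Set.eq_univ_iff_forall.mpr ?_
      rintro ⟨p, q⟩
      rcases Int.even_or_odd (p - q) with ⟨m, hm⟩ | ⟨m, hm⟩
      · left; exact ⟨(p - m, m), by simp only [i1, Prod.mk.injEq]; omega⟩
      · right; exact ⟨(p - m, m), by simp only [i2, Prod.mk.injEq]; omega⟩
  have h1 : HasSum (F ∘ ((↑) : Set.range i1 → ℤ × ℤ)) (theta2 (α + β) τ * theta3 (α - β) τ) := by
    refine (inj1.hasSum_range_iff (f := F)).mpr ?_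
    convert hR1 using 1
    funext x
    simp only [hF, i1, Function.comp_apply, ← Complex.exp_add]
    push_cast
    congr 1; ring
  have h2 : HasSum (F ∘ ((↑) : Set.range i2 → ℤ × ℤ)) (theta3 (α + β) τ * theta2 (α - β) τ) := by
    refine (inj2.hasSum_range_iff (f := F)).mpr ?_
    convert hR2 using 1
    funext x
    simp only [hF, i2, Function.comp_apply, ← Complex.exp_add]
    push_cast
    congr 1; ring
  exact hL.unique (h1.add_isCompl hc h2)

lemma aux_theta12 (α β τ : ℂ) (hτ : 0 < τ.im) :
    theta1 α (τ / 2) * theta2 β (τ / 2) =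
      theta1 (α + β) τ * theta4 (α - β) τ + theta4 (α + β) τ * theta1 (α - β) τ := by
  have h := aux_theta22 (α + 1/2) β τ hτ
  simp only [aux_theta1_shift, aux_theta4_shift]
  rw [show α + β + 1/2 = α + 1/2 + β by ring, show α - β + 1/2 = α + 1/2 - β by ring]
  linear_combination -h

lemma aux_diff2 (τ : ℂ) (hτ : 0 < τ.im) : Differentiable ℂ (fun v => theta2 v τ) := by
  intro x
  simp_rw [aux_theta2_eq]
  have h : DifferentiableAt ℂ (fun v => jacobiTheta₂ (v + τ / 2) τ) x :=
    DifferentiableAt.comp (g := fun v => jacobiTheta₂ v τ) (f := fun v => v + τ / 2) x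
      (differentiableAt_jacobiTheta₂_fst _ hτ) (by fun_prop)
  fun_prop

lemma aux_diff1 (τ : ℂ) (hτ : 0 < τ.im) : Differentiable ℂ (fun v => theta1 v τ) := by
  have h := aux_diff2 τ hτ
  have h' : Differentiable ℂ (fun v => theta2 (v + 1/2) τ) :=
    h.comp (f := fun v => v + 1/2) (by fun_prop)
  exact h'.neg

lemma aux_diff4 (τ : ℂ) (hτ : 0 < τ.im) : Differentiable ℂ (fun v => theta4 v τ) := by
  intro x
  simp_rw [aux_theta4_shift, aux_theta3_eq]
  exact DifferentiableAt.comp (g := fun v => jacobiTheta₂ v τ) (f := fun v => v + 1/2) x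
      (differentiableAt_jacobiTheta₂_fst _ hτ) (by fun_prop)

/-- The Wronskian of `θ₁` and `θ₄`. -/
lemma aux_wronskian (x τ : ℂ) (hτ : 0 < τ.im) :
    deriv (fun v => theta1 v τ) x * theta4 x τ - deriv (fun v => theta4 v τ) x * theta1 x τ =
      deriv (fun v => theta1 v (τ / 2)) 0 / 2 * theta2 x (τ / 2) := by
  have hT : 0 < (τ / 2).im := by
    have : (τ / 2).im = τ.im / 2 := by simp
    rw [this]; positivity
  have hA := (aux_diff1 τ hτ x).hasDerivAt
  have hD := (aux_diff4 τ hτ x).hasDerivAt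
  have hl := (hA.mul_const (theta4 x τ)).sub (hD.mul_const (theta1 x τ))
  have e1 : HasDerivAt (fun v : ℂ => (v - x) / 2) (1 / 2) x :=
    ((hasDerivAt_id x).sub_const x).div_const 2
  have e2 : HasDerivAt (fun v : ℂ => (v + x) / 2) (1 / 2) x :=
    ((hasDerivAt_id x).add_const x).div_const 2
  have k1 : HasDerivAt (fun v => theta1 v (τ / 2)) (deriv (fun v => theta1 v (τ / 2)) 0)
      ((x - x) / 2) := by
    have := (aux_diff1 (τ / 2) hT 0).hasDerivAt
    simpa using this
  have k2 := (aux_diff2 (τ / 2) hT ((x + x) / 2)).hasDerivAt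
  have hr := (k1.comp x e1).mul (k2.comp x e2)
  have hfun : (fun v => theta1 v τ * theta4 x τ - theta4 v τ * theta1 x τ) =
      (fun v => theta1 ((v - x) / 2) (τ / 2) * theta2 ((v + x) / 2) (τ / 2)) := by
    funext v
    rw [aux_theta12 _ _ τ hτ, show (v - x) / 2 + (v + x) / 2 = v by ring,
      show (v - x) / 2 - (v + x) / 2 = -x by ring, aux_theta1_neg, aux_theta4_neg]
    ring
  have h0 : theta1 0 (τ / 2) = 0 := by
    have := aux_theta1_neg 0 (τ / 2)
    rw [neg_zero] at this
    linear_combination this / 2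
  have hl' : HasDerivAt (fun v => theta1 v τ * theta4 x τ - theta4 v τ * theta1 x τ) _ x := hl
  rw [hfun] at hl'
  have := hl'.unique hr
  rw [this]
  simp only [Function.comp_apply, sub_self, zero_div, h0, zero_mul, add_zero,
    show (x + x) / 2 = x by ring]
  ring

lemma aux_Sp (x τ : ℂ) (hτ : 0 < τ.im) (hA : theta1 x τ ≠ 0) (hD : theta4 x τ ≠ 0) :
    Sp x τ = deriv (fun v => theta1 v (τ / 2)) 0 / 2 * theta2 x (τ / 2) /
      (theta1 x τ * theta4 x τ) := by
  rw [← aux_wronskian x τ hτ]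
  unfold Sp zeta1 zeta4
  field_simp

lemma aux_prod14 (x τ : ℂ) (hτ : 0 < τ.im) :
    theta1 x τ * theta4 x τ = theta1 x (τ / 2) * theta2 0 (τ / 2) / 2 := by
  rw [aux_theta12 x 0 τ hτ]; simp; ring

lemma aux_prod23 (x τ : ℂ) (hτ : 0 < τ.im) :
    theta2 x τ * theta3 x τ = theta2 x (τ / 2) * theta2 0 (τ / 2) / 2 := by
  rw [aux_theta22 x 0 τ hτ]; simp; ring

/-- The addition formula at period `τ / 2`. -/
lemma aux_addition (u a b τ : ℂ) (hτ : 0 < τ.im) :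
    theta2 (u + b) (τ / 2) * theta1 b (τ / 2) * (theta1 (u + a) (τ / 2) * theta2 a (τ / 2))
      - theta2 (u + a) (τ / 2) * theta1 a (τ / 2) * (theta1 (u + b) (τ / 2) * theta2 b (τ / 2))
    = theta2 (u + a + b) (τ / 2) * theta1 u (τ / 2) * theta1 (b - a) (τ / 2)
        * theta2 0 (τ / 2) := by
  have q1 := aux_theta12 b (u + b) τ hτ
  have q2 := aux_theta12 (u + a) a τ hτ
  have q3 := aux_theta12 a (u + a) τ hτ
  have q4 := aux_theta12 (u + b) b τ hτ
  have q5 := aux_theta12 u 0 τ hτ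
  have q6 := aux_theta12 (b - a) (u + a + b) τ hτ
  rw [show b + (u + b) = u + 2 * b by ring, show b - (u + b) = -u by ring,
    aux_theta1_neg, aux_theta4_neg] at q1
  rw [show u + a + a = u + 2 * a by ring, show u + a - a = u by ring] at q2
  rw [show a + (u + a) = u + 2 * a by ring, show a - (u + a) = -u by ring,
    aux_theta1_neg, aux_theta4_neg] at q3
  rw [show u + b + b = u + 2 * b by ring, show u + b - b = u by ring] at q4
  rw [add_zero, sub_zero] at q5
  rw [show b - a + (u + a + b) = u + 2 * b by ring,
    show b - a - (u + a + b) = -(u + 2 * a) by ring, aux_theta1_neg, aux_theta4_neg] at q6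
  rw [mul_comm (theta2 (u + b) _), mul_comm (theta2 (u + a) _), q1, q2, q3, q4,
    show theta2 (u + a + b) (τ / 2) * theta1 u (τ / 2) * theta1 (b - a) (τ / 2)
        * theta2 0 (τ / 2) = (theta1 u (τ / 2) * theta2 0 (τ / 2)) *
        (theta1 (b - a) (τ / 2) * theta2 (u + a + b) (τ / 2)) by ring, q5, q6]
  ring

/-- Factorization of differences of elliptic Faber generating functions
(identity (den3)). -/
theorem faber_difference_factorization (τ u ξi ξj : ℂ) (hτ : 0 < τ.im)
    (h1 : theta1 ξi τ ≠ 0) (h2 : theta4 ξi τ ≠ 0)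
    (h3 : theta1 ξj τ ≠ 0) (h4 : theta4 ξj τ ≠ 0)
    (h5 : theta1 (u + ξi) τ ≠ 0) (h6 : theta4 (u + ξi) τ ≠ 0)
    (h7 : theta1 (u + ξj) τ ≠ 0) (h8 : theta4 (u + ξj) τ ≠ 0)
    (h9 : theta2 ξi (τ / 2) ≠ 0) (h10 : theta2 ξj (τ / 2) ≠ 0)
    (h11 : Sp ξi τ ≠ 0) (h12 : Sp ξj τ ≠ 0) :
    Sp (u + ξj) τ / Sp ξj τ - Sp (u + ξi) τ / Sp ξi τ
      = (theta2 (u + ξi + ξj) τ * theta3 (u + ξi + ξj) τ * theta1 u τ * theta4 u τ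
            / (theta1 (u + ξi) τ * theta4 (u + ξi) τ
                * theta1 (u + ξj) τ * theta4 (u + ξj) τ))
        * (theta1 (ξj - ξi) (τ / 2) * theta2 0 (τ / 2)
            / (theta2 ξi (τ / 2) * theta2 ξj (τ / 2))) := by
  have hadd := aux_addition u ξi ξj τ hτ
  have p1 := aux_prod14 ξi τ hτ
  have p2 := aux_prod14 ξj τ hτ
  have p3 := aux_prod14 (u + ξi) τ hτ
  have p4 := aux_prod14 (u + ξj) τ hτ
  have n1 := mul_ne_zero h1 h2
  have n2 := mul_ne_zero h3 h4
  have n3 := mul_ne_zero h5 h6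
  have n4 := mul_ne_zero h7 h8
  have s1 := aux_Sp ξi τ hτ h1 h2
  have s2 := aux_Sp ξj τ hτ h3 h4
  rw [s1] at h11
  rw [aux_Sp (u + ξj) τ hτ h7 h8, aux_Sp (u + ξi) τ hτ h5 h6, s1, s2,
    show theta1 (u + ξi) τ * theta4 (u + ξi) τ * theta1 (u + ξj) τ * theta4 (u + ξj) τ =
      (theta1 (u + ξi) τ * theta4 (u + ξi) τ) * (theta1 (u + ξj) τ * theta4 (u + ξj) τ) by ring,
    show theta2 (u + ξi + ξj) τ * theta3 (u + ξi + ξj) τ * theta1 u τ * theta4 u τ =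
      (theta2 (u + ξi + ξj) τ * theta3 (u + ξi + ξj) τ) * (theta1 u τ * theta4 u τ) by ring,
    aux_prod23 _ τ hτ, aux_prod14 u τ hτ, p1, p2, p3, p4]
  rw [p1] at n1 h11
  rw [p2] at n2
  rw [p3] at n3
  rw [p4] at n4
  generalize deriv (fun v => theta1 v (τ / 2)) 0 / 2 = e at *
  have he : e ≠ 0 := by rintro rfl; simp at h11
  have hN : theta2 0 (τ / 2) ≠ 0 := by intro h; simp [h] at n1
  have m1 : theta1 ξi (τ / 2) ≠ 0 := by intro h; simp [h] at n1
  have m2 : theta1 ξj (τ / 2) ≠ 0 := by intro h; simp [h] at n2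
  have m3 : theta1 (u + ξi) (τ / 2) ≠ 0 := by intro h; simp [h] at n3
  have m4 : theta1 (u + ξj) (τ / 2) ≠ 0 := by intro h; simp [h] at n4
  clear p1 p2 p3 p4 s1 s2 h11 n1 n2 n3 n4 h1 h2 h3 h4 h5 h6 h7 h8 h12
  generalize theta2 0 (τ / 2) = N at *
  generalize theta2 (u + ξi + ξj) (τ / 2) = w at *
  generalize theta1 u (τ / 2) = v at *
  generalize theta1 (ξj - ξi) (τ / 2) = z at *
  generalize theta1 (u + ξi) (τ / 2) = a1 at *
  generalize theta1 (u + ξj) (τ / 2) = a2 at *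
  generalize theta2 (u + ξi) (τ / 2) = a3 at *
  generalize theta2 (u + ξj) (τ / 2) = a4 at *
  generalize theta1 ξi (τ / 2) = b1 at *
  generalize theta1 ξj (τ / 2) = b2 at *
  generalize theta2 ξi (τ / 2) = b3 at *
  generalize theta2 ξj (τ / 2) = b4 at *
  have l : e * a4 / (a2 * N / 2) / (e * b4 / (b2 * N / 2))
      - e * a3 / (a1 * N / 2) / (e * b3 / (b1 * N / 2))
      = (a4 * b2 * (a1 * b3) - a3 * b1 * (a2 * b4)) / (a1 * a2 * b3 * b4) := by
    field_simp
  rw [l, hadd]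
  field_simp
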